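/- Let m ≥ 3 be odd, σ₀ ∈ {−1, +1}, μ ≥ 0, L, T, τ > 0, and let f : ℝ → ℝ be C² with ‖f″‖_∞ := sup_ℝ |f″| < ∞. Let q = (q₀, …, q_{m−1}) be a C¹ solution, L-periodic in x, of ∂_t q₀ + ∂_x f(q₀) + σ₀ ∂_x q_{m−1} = 0 and τ ∂_t q_j + σ₀ (−1)^j ∂_x q_{m−j−1} = σ₀ (−1)^j q_{m−j} − δ_{j,1} μ q₁ (1 ≤ j ≤ m−1). Let q̄ = (q̄₀, …, q̄_{m−1}) be a C¹ tuple, L-periodic in x with ∂_x q̄₀ bounded, satisfying the same system except that the first equation carries a residual: ∂_t q̄₀ + ∂_x f(q̄₀) + σ₀ ∂_x q̄_{m−1} = τ R for some continuous R. Then the relative energy η(q, q̄)(t) = ∫₀^L ( ½ (q₀−q̄₀)² + (τ/2) Σ_{j=1}^{m−1} (q_j−q̄_j)² ) dx satisfies, for all t ∈ [0,T], d/dt η(q, q̄)(t) ≤ ( ‖f″‖_∞ · sup |∂_x q̄₀| + 1 ) η(q, q̄)(t) + τ² ∫₀^L R(t,x)² dx. -/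

import Mathlib

open MeasureTheory

/-- Partial derivative with respect to the first (time) variable. -/
noncomputable def pdt (u : ℝ → ℝ → ℝ) : ℝ → ℝ → ℝ :=
  fun t x => deriv (fun s => u s x) t

/-- Partial derivative with respect to the second (space) variable. -/
noncomputable def pdx (u : ℝ → ℝ → ℝ) : ℝ → ℝ → ℝ :=
  fun t x => deriv (fun y => u t y) x

theorem ContDiff.hasDerivAt_pdt {u : ℝ → ℝ → ℝ} (hu : ContDiff ℝ 1 (Function.uncurry u))
    (t x : ℝ) : HasDerivAt (fun s => u s x) (pdt u t x) t := by
  have h : ContDiff ℝ 1 (fun s => u s x) :=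
    hu.comp (contDiff_id.prodMk contDiff_const : ContDiff ℝ 1 fun s : ℝ => (s, x))
  exact (h.differentiable one_ne_zero t).hasDerivAt

theorem ContDiff.hasDerivAt_pdx {u : ℝ → ℝ → ℝ} (hu : ContDiff ℝ 1 (Function.uncurry u))
    (t x : ℝ) : HasDerivAt (fun y => u t y) (pdx u t x) x := by
  have h : ContDiff ℝ 1 (fun y => u t y) :=
    hu.comp (contDiff_const.prodMk contDiff_id : ContDiff ℝ 1 fun y : ℝ => (t, y))
  exact (h.differentiable one_ne_zero x).hasDerivAt

theorem ContDiff.continuous_pdt {u : ℝ → ℝ → ℝ} (hu : ContDiff ℝ 1 (Function.uncurry u)) :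
    Continuous (Function.uncurry (pdt u)) := by
  have h : Function.uncurry (pdt u)
      = fun p : ℝ × ℝ => fderiv ℝ (Function.uncurry u) p ((1, 0) : ℝ × ℝ) := by
    funext ⟨t, x⟩
    have h₁ : HasDerivAt (fun s : ℝ => (s, x)) ((1, 0) : ℝ × ℝ) t :=
      (hasDerivAt_id t).prodMk (hasDerivAt_const t x)
    exact (((hu.differentiable one_ne_zero (t, x)).hasFDerivAt).comp_hasDerivAt t h₁).deriv
  rw [h]
  exact (hu.continuous_fderiv one_ne_zero).clm_apply continuous_const

/-- Differentiation under the integral sign for a jointly `C¹` integrand. -/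
theorem ContDiff.hasDerivAt_intervalIntegral {u : ℝ → ℝ → ℝ}
    (hu : ContDiff ℝ 1 (Function.uncurry u)) (a b t : ℝ) :
    HasDerivAt (fun s => ∫ x in a..b, u s x) (∫ x in a..b, pdt u t x) t := by
  have hc := hu.continuous_pdt
  have hslice : ∀ s, Continuous (u s) := fun s => hu.continuous.comp (Continuous.prodMk_right s)
  obtain ⟨C, hC⟩ := ((isCompact_closedBall t 1).prod (isCompact_uIcc (a := a) (b := b)))
    |>.exists_bound_of_continuousOn hc.continuousOn
  refine (intervalIntegral.hasDerivAt_integral_of_dominated_loc_of_deriv_le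
    (F := u) (F' := pdt u) (bound := fun _ => C) (Metric.closedBall_mem_nhds t one_pos)
    (Filter.Eventually.of_forall fun s => (hslice s).aestronglyMeasurable)
    ((hslice t).intervalIntegrable a b)
    (hc.comp (Continuous.prodMk_right t)).aestronglyMeasurable
    (Filter.Eventually.of_forall fun x hx s hs => ?_) intervalIntegrable_const
    (Filter.Eventually.of_forall fun x _ s _ => hu.hasDerivAt_pdt s x)).2
  exact hC (s, x) ⟨hs, Set.uIoc_subset_uIcc hx⟩

theorem abs_sub_tangent_le {f : ℝ → ℝ} (hf : ContDiff ℝ 2 f) {M : ℝ}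
    (hM : ∀ x, |deriv (deriv f) x| ≤ M) (u v : ℝ) :
    |f u - f v - deriv f v * (u - v)| ≤ M / 2 * (u - v) ^ 2 := by
  rcases eq_or_ne v u with rfl | hne
  · simp
  obtain ⟨ξ, -, h⟩ := taylor_mean_remainder_lagrange_iteratedDeriv (n := 1) hne
    (hf.contDiffOn)
  have hd : derivWithin f (Set.uIcc v u) v = deriv f v :=
    (hf.differentiable two_ne_zero v).derivWithin
      (uniqueDiffOn_uIcc hne v Set.left_mem_uIcc)
  have h2 : f u - f v - deriv f v * (u - v) = deriv (deriv f) ξ / 2 * (u - v) ^ 2 := by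
    simp only [taylorWithinEval_succ, taylor_within_zero_eval, iteratedDeriv_succ,
      iteratedDeriv_zero] at h
    norm_num at h
    rw [hd] at h
    linarith
  rw [h2, abs_mul, abs_of_nonneg (sq_nonneg (u - v)), abs_div, abs_two]
  gcongr
  exact hM ξ

/-- A periodic `C¹` function has a derivative of zero mean over a period. -/
theorem ContDiff.integral_deriv_eq_zero_of_periodic {P : ℝ → ℝ} (hP : ContDiff ℝ 1 P) {L : ℝ}
    (hper : Function.Periodic P L) : ∫ x in (0 : ℝ)..L, deriv P x = 0 := by
  rw [intervalIntegral.integral_deriv_eq_sub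
    (fun x _ => hP.differentiable one_ne_zero x)
    ((hP.continuous_deriv le_rfl).intervalIntegrable 0 L)]
  simpa [sub_eq_zero] using hper 0

theorem sum_range_alternating_reflect {m : ℕ} (hm : Odd m) (a b : ℕ → ℝ) :
    ∑ j ∈ Finset.range m, (-1 : ℝ) ^ j * (b j * a (m - 1 - j))
      = ∑ j ∈ Finset.range m, (-1 : ℝ) ^ j * (a j * b (m - 1 - j)) := by
  rw [← Finset.sum_range_reflect]
  refine Finset.sum_congr rfl fun j hj => ?_
  have hj' := Finset.mem_range.mp hj
  obtain ⟨k, rfl⟩ := hm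
  have hpow : (-1 : ℝ) ^ (2 * k + 1 - 1 - j) = (-1) ^ j := by
    rcases Nat.even_or_odd j with h | h
    · rw [h.neg_one_pow, Even.neg_one_pow]; grind
    · rw [h.neg_one_pow, Odd.neg_one_pow]; grind
  rw [hpow, show 2 * k + 1 - 1 - (2 * k + 1 - 1 - j) = j by omega]
  ring

theorem sum_Icc_alternating_mul_reflect_eq_zero {m : ℕ} (hm : Odd m) (a : ℕ → ℝ) :
    ∑ j ∈ Finset.Icc 1 (m - 1), (-1 : ℝ) ^ j * (a j * a (m - j)) = 0 := by
  have h : ∑ j ∈ Finset.Icc 1 (m - 1), (-1 : ℝ) ^ j * (a j * a (m - j))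
      = ∑ j ∈ Finset.Icc 1 (m - 1), -((-1 : ℝ) ^ j * (a j * a (m - j))) := by
    refine Finset.sum_nbij' (fun j => m - j) (fun j => m - j) ?_ ?_ ?_ ?_ ?_
    · intro j hj; simp only [Finset.mem_Icc] at hj ⊢; omega
    · intro j hj; simp only [Finset.mem_Icc] at hj ⊢; omega
    · intro j hj; simp only [Finset.mem_Icc] at hj; omega
    · intro j hj; simp only [Finset.mem_Icc] at hj; omega
    · intro j hj
      simp only [Finset.mem_Icc] at hj
      have hpow : (-1 : ℝ) ^ (m - j) = -(-1) ^ j := by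
        rcases Nat.even_or_odd j with h | h
        · rw [h.neg_one_pow, Odd.neg_one_pow]; grind
        · rw [h.neg_one_pow, Even.neg_one_pow] <;> grind
      rw [hpow, show m - (m - j) = j by omega]
      ring
  rw [Finset.sum_neg_distrib] at h
  linarith

/-- Energy production of the linear part of the odd-order system at a single point: `a`, `b`, `c`
stand for the values, space derivatives and time derivatives of the unknowns. -/
theorem odd_order_energy_production {m : ℕ} (hm : Odd m) (hm3 : 3 ≤ m) (σ₀ μ τ N : ℝ)
    (a b c : ℕ → ℝ) (h₀ : c 0 = -N - σ₀ * b (m - 1))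
    (h : ∀ j ∈ Finset.Icc 1 (m - 1), τ * c j
      = -(σ₀ * (-1 : ℝ) ^ j * b (m - 1 - j)) + σ₀ * (-1 : ℝ) ^ j * a (m - j)
        - (if j = 1 then μ * a 1 else 0)) :
    a 0 * c 0 + τ * ∑ j ∈ Finset.Icc 1 (m - 1), a j * c j
      = -(a 0 * N) - σ₀ * (∑ j ∈ Finset.range m, (-1 : ℝ) ^ j * (a j * b (m - 1 - j)))
        - μ * a 1 ^ 2 := by
  have hrange : ∑ j ∈ Finset.range m, (-1 : ℝ) ^ j * (a j * b (m - 1 - j))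
      = a 0 * b (m - 1)
        + ∑ j ∈ Finset.Icc 1 (m - 1), (-1 : ℝ) ^ j * (a j * b (m - 1 - j)) := by
    rw [Finset.sum_range_eq_add_Ico _ (by omega),
      show Finset.Ico 1 m = Finset.Icc 1 (m - 1) by ext; simp; omega]
    simp
  have hdamp : ∑ j ∈ Finset.Icc 1 (m - 1), a j * (if j = 1 then μ * a 1 else 0)
      = μ * a 1 ^ 2 := by
    rw [Finset.sum_eq_single_of_mem 1 (by simp; omega) (fun j _ hj => by simp [hj])]
    simp; ring
  have hsum : τ * ∑ j ∈ Finset.Icc 1 (m - 1), a j * c j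
      = -σ₀ * (∑ j ∈ Finset.Icc 1 (m - 1), (-1 : ℝ) ^ j * (a j * b (m - 1 - j)))
        + σ₀ * (∑ j ∈ Finset.Icc 1 (m - 1), (-1 : ℝ) ^ j * (a j * a (m - j)))
        - ∑ j ∈ Finset.Icc 1 (m - 1), a j * (if j = 1 then μ * a 1 else 0) := by
    rw [Finset.mul_sum, Finset.mul_sum, Finset.mul_sum, ← Finset.sum_add_distrib,
      ← Finset.sum_sub_distrib]
    refine Finset.sum_congr rfl fun j hj => ?_
    rw [mul_left_comm, h j hj]
    ring
  rw [hsum, sum_Icc_alternating_mul_reflect_eq_zero hm, hdamp, hrange, h₀]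
  ring

/-- The relative entropy flux of a scalar conservation law for the quadratic entropy. -/
noncomputable def relativeFlux (f : ℝ → ℝ) (u v : ℝ) : ℝ :=
  (u - v) * (f u - f v) - ((∫ z in v..u, f z) - f v * (u - v))

theorem contDiff_integral_of_continuous {f : ℝ → ℝ} (hf : Continuous f) :
    ContDiff ℝ 1 (fun y => ∫ z in (0 : ℝ)..y, f z) := by
  have hd := fun y => hf.integral_hasStrictDerivAt 0 y |>.hasDerivAt
  rw [contDiff_one_iff_deriv]
  exact ⟨fun y => (hd y).differentiableAt, by simpa only [funext fun y => (hd y).deriv] using hf⟩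

theorem relativeFlux_eq {f : ℝ → ℝ} (hf : Continuous f) (u v : ℝ) :
    relativeFlux f u v = (u - v) * (f u - f v)
      - ((∫ z in (0 : ℝ)..u, f z) - (∫ z in (0 : ℝ)..v, f z) - f v * (u - v)) := by
  rw [relativeFlux, intervalIntegral.integral_interval_sub_left
    (hf.intervalIntegrable _ _) (hf.intervalIntegrable _ _)]

theorem ContDiff.relativeFlux {f u v : ℝ → ℝ} (hf : ContDiff ℝ 1 f) (hu : ContDiff ℝ 1 u)
    (hv : ContDiff ℝ 1 v) : ContDiff ℝ 1 (fun x => relativeFlux f (u x) (v x)) := by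
  simp only [relativeFlux_eq hf.continuous]
  have hG := contDiff_integral_of_continuous hf.continuous
  exact ((hu.sub hv).mul ((hf.comp hu).sub (hf.comp hv))).sub
    (((hG.comp hu).sub (hG.comp hv)).sub ((hf.comp hv).mul (hu.sub hv)))

theorem hasDerivAt_relativeFlux {f u v : ℝ → ℝ} {u' v' x : ℝ} (hf : Differentiable ℝ f)
    (hu : HasDerivAt u u' x) (hv : HasDerivAt v v' x) :
    HasDerivAt (fun x => relativeFlux f (u x) (v x))
      ((u x - v x) * (deriv f (u x) * u' - deriv f (v x) * v')
        - v' * (f (u x) - f (v x) - deriv f (v x) * (u x - v x))) x := by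
  simp only [relativeFlux_eq hf.continuous]
  have hG := fun y => hf.continuous.integral_hasStrictDerivAt 0 y |>.hasDerivAt
  have hfu := (hf (u x)).hasDerivAt.comp x hu
  have hfv := (hf (v x)).hasDerivAt.comp x hv
  have := ((hu.sub hv).mul (hfu.sub hfv)).sub
    ((((hG (u x)).comp x hu).sub ((hG (v x)).comp x hv)).sub (hfv.mul (hu.sub hv)))
  convert! this using 1
  simp only [Function.comp_apply, Pi.sub_apply]
  ring

/-- Relative energy inequality for the generalized odd-order hyperbolic
approximation: if `q` solves the system and `q̄` solves it with a residual `τ R`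
in the first equation, then
`d/dt η(q, q̄) ≤ (‖f″‖_∞ · sup|∂_x q̄₀| + 1) η(q, q̄) + τ² ∫₀^L R² dx`. -/
theorem odd_order_relative_energy_inequality
    (m : ℕ) (hm : Odd m) (hm3 : 3 ≤ m)
    (σ₀ : ℝ) (hσ : σ₀ = 1 ∨ σ₀ = -1) (μ : ℝ) (hμ : 0 ≤ μ)
    (L T τ : ℝ) (hL : 0 < L) (hT : 0 < T) (hτ : 0 < τ)
    (f : ℝ → ℝ) (hf : ContDiff ℝ 2 f)
    (Mf : ℝ) (hMf : ∀ x : ℝ, |deriv (deriv f) x| ≤ Mf)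
    (q qb : ℕ → ℝ → ℝ → ℝ) (R : ℝ → ℝ → ℝ)
    (hq : ∀ j < m, ContDiff ℝ 1 (Function.uncurry (q j)))
    (hqb : ∀ j < m, ContDiff ℝ 1 (Function.uncurry (qb j)))
    (hR : Continuous (Function.uncurry R))
    (hper : ∀ j < m, ∀ t, Function.Periodic (q j t) L)
    (hperb : ∀ j < m, ∀ t, Function.Periodic (qb j t) L)
    (B : ℝ) (hB : ∀ t x : ℝ, |pdx (qb 0) t x| ≤ B)
    (heq₀ : ∀ t ∈ Set.Icc (0:ℝ) T, ∀ x : ℝ,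
      pdt (q 0) t x + pdx (fun s y => f (q 0 s y)) t x
        + σ₀ * pdx (q (m - 1)) t x = 0)
    (heq : ∀ j ∈ Finset.Icc 1 (m - 1), ∀ t ∈ Set.Icc (0:ℝ) T, ∀ x : ℝ,
      τ * pdt (q j) t x + σ₀ * (-1 : ℝ) ^ j * pdx (q (m - j - 1)) t x
        = σ₀ * (-1 : ℝ) ^ j * q (m - j) t x
          - (if j = 1 then μ * q 1 t x else 0))
    (heqb₀ : ∀ t ∈ Set.Icc (0:ℝ) T, ∀ x : ℝ,
      pdt (qb 0) t x + pdx (fun s y => f (qb 0 s y)) t x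
        + σ₀ * pdx (qb (m - 1)) t x = τ * R t x)
    (heqb : ∀ j ∈ Finset.Icc 1 (m - 1), ∀ t ∈ Set.Icc (0:ℝ) T, ∀ x : ℝ,
      τ * pdt (qb j) t x + σ₀ * (-1 : ℝ) ^ j * pdx (qb (m - j - 1)) t x
        = σ₀ * (-1 : ℝ) ^ j * qb (m - j) t x
          - (if j = 1 then μ * qb 1 t x else 0)) :
    ∀ t ∈ Set.Icc (0:ℝ) T, ∃ d : ℝ,
      HasDerivWithinAt
        (fun s => ∫ x in (0:ℝ)..L,
          ((q 0 s x - qb 0 s x) ^ 2 / 2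
            + τ / 2 * ∑ j ∈ Finset.Icc 1 (m - 1), (q j s x - qb j s x) ^ 2))
        d (Set.Icc (0:ℝ) T) t ∧
      d ≤ (Mf * B + 1) *
            (∫ x in (0:ℝ)..L,
              ((q 0 t x - qb 0 t x) ^ 2 / 2
                + τ / 2 * ∑ j ∈ Finset.Icc 1 (m - 1), (q j t x - qb j t x) ^ 2))
          + τ ^ 2 * ∫ x in (0:ℝ)..L, R t x ^ 2 := by
  intro t ht
  have hm0 : 0 < m := by omega
  have hf1 : Differentiable ℝ f := hf.differentiable two_ne_zero
  have hidx : ∀ j ∈ Finset.Icc 1 (m - 1), j < m := fun j hj => by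
    have := Finset.mem_Icc.mp hj; omega
  have hslice : ∀ {u : ℝ → ℝ → ℝ}, ContDiff ℝ 1 (Function.uncurry u) → ContDiff ℝ 1 (u t) :=
    fun hu => hu.comp (contDiff_const.prodMk contDiff_id : ContDiff ℝ 1 fun y : ℝ => (t, y))
  set e : ℝ → ℝ → ℝ := fun s x => (q 0 s x - qb 0 s x) ^ 2 / 2
    + τ / 2 * ∑ j ∈ Finset.Icc 1 (m - 1), (q j s x - qb j s x) ^ 2 with he
  have heC : ContDiff ℝ 1 (Function.uncurry e) := by
    have hw : ∀ j < m, ContDiff ℝ 1 (fun p : ℝ × ℝ => (q j p.1 p.2 - qb j p.1 p.2) ^ 2) :=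
      fun j hj => ((hq j hj).sub (hqb j hj)).pow 2
    exact ((hw 0 hm0).div_const 2).add
      (contDiff_const.mul (ContDiff.sum fun j hj => hw j (hidx j hj)))
  refine ⟨_, (heC.hasDerivAt_intervalIntegral 0 L t).hasDerivWithinAt, ?_⟩
  -- the total energy flux, whose space derivative integrates to zero over a period
  set P : ℝ → ℝ := fun x => relativeFlux f (q 0 t x) (qb 0 t x)
    + σ₀ / 2 * ∑ j ∈ Finset.range m, (-1 : ℝ) ^ j *
      ((q j t x - qb j t x) * (q (m - 1 - j) t x - qb (m - 1 - j) t x)) with hPdef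
  have hPC : ContDiff ℝ 1 P := by
    have hw : ∀ j < m, ContDiff ℝ 1 (fun x => q j t x - qb j t x) :=
      fun j hj => (hslice (hq j hj)).sub (hslice (hqb j hj))
    refine ((hf.of_le one_le_two).relativeFlux (hslice (hq 0 hm0)) (hslice (hqb 0 hm0))).add
      (contDiff_const.mul (ContDiff.sum fun j hj => ?_))
    have hj' := Finset.mem_range.mp hj
    exact contDiff_const.mul ((hw j hj').mul (hw (m - 1 - j) (by omega)))
  have hPper : Function.Periodic P L := by
    intro x
    simp only [hPdef]
    rw [hper 0 hm0 t x, hperb 0 hm0 t x]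
    congr 2
    refine Finset.sum_congr rfl fun j hj => ?_
    have hj' := Finset.mem_range.mp hj
    rw [hper j hj' t x, hperb j hj' t x, hper (m - 1 - j) (by omega) t x,
      hperb (m - 1 - j) (by omega) t x]
  have hpt : ∀ x, pdt e t x ≤ (Mf * B + 1) * e t x + τ ^ 2 * R t x ^ 2 - deriv P x := by
    intro x
    set a : ℕ → ℝ := fun j => q j t x - qb j t x with ha
    set b : ℕ → ℝ := fun j => pdx (q j) t x - pdx (qb j) t x with hb
    set c : ℕ → ℝ := fun j => pdt (q j) t x - pdt (qb j) t x with hc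
    have hda : ∀ j < m, HasDerivAt (fun y => q j t y - qb j t y) (b j) x := fun j hj =>
      ((hq j hj).hasDerivAt_pdx t x).sub ((hqb j hj).hasDerivAt_pdx t x)
    have hdc : ∀ j < m, HasDerivAt (fun s => q j s x - qb j s x) (c j) t := fun j hj =>
      ((hq j hj).hasDerivAt_pdt t x).sub ((hqb j hj).hasDerivAt_pdt t x)
    have hde : pdt e t x = a 0 * c 0 + τ * ∑ j ∈ Finset.Icc 1 (m - 1), a j * c j := by
      have h := (((hdc 0 hm0).pow 2).div_const 2).add
        ((HasDerivAt.fun_sum fun j hj => (hdc j (hidx j hj)).pow 2).const_mul (τ / 2))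
      refine (HasDerivAt.deriv h).trans ?_
      simp only [Nat.cast_ofNat, Nat.add_one_sub_one, pow_one, mul_assoc, ← Finset.mul_sum]
      ring
    set N : ℝ := deriv f (q 0 t x) * pdx (q 0) t x - deriv f (qb 0 t x) * pdx (qb 0) t x with hN
    have hdP : deriv P x = a 0 * N
        - pdx (qb 0) t x * (f (q 0 t x) - f (qb 0 t x) - deriv f (qb 0 t x) * a 0)
        + σ₀ * ∑ j ∈ Finset.range m, (-1 : ℝ) ^ j * (a j * b (m - 1 - j)) := by
      have h := (hasDerivAt_relativeFlux hf1 ((hq 0 hm0).hasDerivAt_pdx t x)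
        ((hqb 0 hm0).hasDerivAt_pdx t x)).add
        ((HasDerivAt.fun_sum (u := Finset.range m) fun j hj =>
          ((hda j (Finset.mem_range.mp hj)).mul
            (hda (m - 1 - j) (by have := Finset.mem_range.mp hj; omega))).const_mul
              ((-1 : ℝ) ^ j)).const_mul (σ₀ / 2))
      refine (HasDerivAt.deriv h).trans ?_
      have ha' : ∀ j, q j t x - qb j t x = a j := fun _ => rfl
      simp only [ha', ← hN, mul_add, Finset.sum_add_distrib]
      rw [sum_range_alternating_reflect hm a b]
      ring
    have hflux : ∀ {u : ℝ → ℝ → ℝ}, ContDiff ℝ 1 (Function.uncurry u) →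
        pdx (fun s y => f (u s y)) t x = deriv f (u t x) * pdx u t x := fun hu =>
      ((hf1 _).hasDerivAt.comp x (hu.hasDerivAt_pdx t x)).deriv
    have h₀ : c 0 = -(N + τ * R t x) - σ₀ * b (m - 1) := by
      have h1 := heq₀ t ht x
      have h2 := heqb₀ t ht x
      rw [hflux (hq 0 hm0)] at h1
      rw [hflux (hqb 0 hm0)] at h2
      simp only [hc, hb, hN]
      linarith
    have hprod := odd_order_energy_production hm hm3 σ₀ μ τ (N + τ * R t x) a b c h₀ (by
      intro j hj
      have h1 := heq j hj t ht x
      have h2 := heqb j hj t ht x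
      rw [Nat.sub_right_comm] at h1 h2
      simp only [hc, hb, ha]
      split_ifs at h1 h2 ⊢ <;> linarith)
    have htan := abs_sub_tangent_le hf hMf (q 0 t x) (qb 0 t x)
    have hB0 : 0 ≤ B := (abs_nonneg _).trans (hB t x)
    have hM0 : 0 ≤ Mf := (abs_nonneg _).trans (hMf 0)
    have hnl : -(pdx (qb 0) t x * (f (q 0 t x) - f (qb 0 t x) - deriv f (qb 0 t x) * a 0))
        ≤ B * (Mf / 2 * a 0 ^ 2) := by
      refine (neg_le_abs _).trans ?_
      rw [abs_mul]
      exact mul_le_mul (hB t x) htan (abs_nonneg _) hB0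
    have hsum : 0 ≤ (Mf * B + 1) * (τ / 2 * ∑ j ∈ Finset.Icc 1 (m - 1), a j ^ 2) := by
      positivity
    have hex : e t x = a 0 ^ 2 / 2 + τ / 2 * ∑ j ∈ Finset.Icc 1 (m - 1), a j ^ 2 := rfl
    have hdamp : 0 ≤ μ * a 1 ^ 2 := by positivity
    rw [hde, hprod, hdP, hex]
    nlinarith [sq_nonneg (a 0 + τ * R t x), sq_nonneg (τ * R t x)]
  have hie : IntervalIntegrable (e t) volume 0 L := (hslice heC).continuous.intervalIntegrable 0 L
  have hiR : IntervalIntegrable (fun x => R t x ^ 2) volume 0 L :=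
    ((hR.comp (Continuous.prodMk_right t)).pow 2).intervalIntegrable 0 L
  have hiP : IntervalIntegrable (deriv P) volume 0 L :=
    (hPC.continuous_deriv le_rfl).intervalIntegrable 0 L
  have hiS := (hie.const_mul (Mf * B + 1)).add (hiR.const_mul (τ ^ 2))
  calc ∫ x in (0 : ℝ)..L, pdt e t x
      ≤ ∫ x in (0 : ℝ)..L, ((Mf * B + 1) * e t x + τ ^ 2 * R t x ^ 2 - deriv P x) :=
        intervalIntegral.integral_mono hL.le
          ((heC.continuous_pdt.comp (Continuous.prodMk_right t)).intervalIntegrable 0 L)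
          (hiS.sub hiP) hpt
    _ = (Mf * B + 1) * (∫ x in (0 : ℝ)..L, e t x) + τ ^ 2 * ∫ x in (0 : ℝ)..L, R t x ^ 2 := by
        rw [intervalIntegral.integral_sub hiS hiP, intervalIntegral.integral_add
          (hie.const_mul _) (hiR.const_mul _), intervalIntegral.integral_const_mul,
          intervalIntegral.integral_const_mul, hPC.integral_deriv_eq_zero_of_periodic hPper,
          sub_zero]
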